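/- In the recursive construction of K_i with i odd, the subspace B_i := K_{i-1}^{(1)} + … + K_{i-1}^{(n_i)} intersects A_i trivially: if a nonzero a ∈ A_i were in B_i, then the all-ones vector on some block {k}×Ω_{i-1} would lie in K_{i-1}^{(k)}, contradicting that every element of K_{i-1} has even weight while |Ω_{i-1}| = n₁⋯n_{i-1} is odd. -/

import Mathlib

/-- The iterated index set `Ω_i = {1,…,n_i} × Ω_{i-1}`, `Ω_0` a singleton.
Here `n k` plays the role of `n_{k+1}`. -/
def Om (n : ℕ → ℕ) : ℕ → Type
  | 0 => Unit
  | i + 1 => Fin (n i) × Om n i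

/-- The embedding of `V_{i-1}` into `V_i` supported on the block `{k} × Ω_{i-1}`. -/
def emb (n : ℕ → ℕ) (i : ℕ) (k : Fin (n i)) :
    (Om n i → ZMod 2) →ₗ[ZMod 2] (Om n (i + 1) → ZMod 2) where
  toFun v := fun p => if p.1 = k then v p.2 else 0
  map_add' := by
    intro x y; funext p; by_cases h : p.1 = k <;> simp [h]
  map_smul' := by
    intro m x; funext p; by_cases h : p.1 = k <;> simp [h]

/-- The subspace `A_i ≤ V_i`, spanned by the vectors `a_i^{(k,l)}`, the characteristic
vectors of `({k} ∪ {l}) × Ω_{i-1}` for `k ≠ l`. -/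
def Acode (n : ℕ → ℕ) (i : ℕ) : Submodule (ZMod 2) (Om n (i + 1) → ZMod 2) :=
  Submodule.span (ZMod 2)
    {v | ∃ k l : Fin (n i), k ≠ l ∧
      v = fun p => if p.1 = k ∨ p.1 = l then 1 else 0}

/-- The recursively defined codes `K_i = K(n_1,…,n_i)`. -/
def Kcode (n : ℕ → ℕ) : (i : ℕ) → Submodule (ZMod 2) (Om n i → ZMod 2)
  | 0 => ⊥
  | i + 1 =>
    (⨆ k : Fin (n i), (Kcode n i).map (emb n i k)) ⊔
      (if (i + 1) % 2 = 1 then Acode n i else ⊥)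

/-! The embeddings `emb n i k` preserve Hamming weight and `a_i^{(k,l)}` is the sum of two embedded
all-ones vectors, so by induction every codeword of `K_i` has even weight. A nonzero element of
`A_i` restricts to the all-ones vector on some block `{k} × Ω_{i-1}`, whereas every element of `B_i`
restricts to a codeword of `K_{i-1}`. As `|Ω_{i-1}|` is odd, the all-ones vector is not such a
codeword. -/

section EvenWeight

variable (ι : Type*) [Fintype ι]

/-- The code of all binary words of even Hamming weight, encoded as the words whose coordinates sum
to zero in `ZMod 2`. -/
def evenWeightCode : Submodule (ZMod 2) (ι → ZMod 2) :=
  LinearMap.ker (∑ x : ι, LinearMap.proj x : (ι → ZMod 2) →ₗ[ZMod 2] ZMod 2)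

variable {ι}

lemma mem_evenWeightCode {v : ι → ZMod 2} : v ∈ evenWeightCode ι ↔ ∑ x, v x = 0 := by
  simp [evenWeightCode]

lemma one_notMem_evenWeightCode (hι : Odd (Fintype.card ι)) :
    (1 : ι → ZMod 2) ∉ evenWeightCode ι := by
  simp [mem_evenWeightCode, ZMod.natCast_eq_one_iff_odd.2 hι]

end EvenWeight

section IndexSet

variable (n : ℕ → ℕ)

instance Om.instFintype : (i : ℕ) → Fintype (Om n i)
  | 0 => inferInstanceAs (Fintype Unit)
  | i + 1 =>
    haveI := Om.instFintype i
    inferInstanceAs (Fintype (Fin (n i) × Om n i))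

lemma card_Om (i : ℕ) : Fintype.card (Om n i) = ∏ j ∈ Finset.range i, n j := by
  induction i with
  | zero => rfl
  | succ i ih =>
    calc Fintype.card (Fin (n i) × Om n i)
        = n i * Fintype.card (Om n i) := by rw [Fintype.card_prod, Fintype.card_fin]
      _ = ∏ j ∈ Finset.range (i + 1), n j := by rw [ih, Finset.prod_range_succ, mul_comm]

lemma odd_card_Om {n : ℕ → ℕ} {i : ℕ} (hn : ∀ j < i, Odd (n j)) :
    Odd (Fintype.card (Om n i)) := by
  rw [card_Om]
  exact Finset.prod_induction n Odd (fun _ _ => Odd.mul) odd_one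
    fun j hj => hn j (Finset.mem_range.1 hj)

end IndexSet

section Blocks

variable {n : ℕ → ℕ} {i : ℕ}

/-- The restriction `V_i → V_{i-1}` of a word to the block `{k} × Ω_{i-1}`, a left inverse of
`emb n i k`. -/
def blockRestrict (k : Fin (n i)) : (Om n (i + 1) → ZMod 2) →ₗ[ZMod 2] (Om n i → ZMod 2) :=
  LinearMap.funLeft (ZMod 2) (ZMod 2) fun x => (k, x)

lemma blockRestrict_emb (j k : Fin (n i)) (v : Om n i → ZMod 2) :
    blockRestrict j (emb n i k v) = if j = k then v else 0 :=
  funext fun x => (ite_apply (j = k) v 0 x).symm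

lemma iSup_map_emb_le_comap_blockRestrict (C : Submodule (ZMod 2) (Om n i → ZMod 2))
    (j : Fin (n i)) :
    ⨆ k : Fin (n i), C.map (emb n i k) ≤ C.comap (blockRestrict j) := by
  refine iSup_le fun k => Submodule.map_le_iff_le_comap.2 fun v hv => ?_
  rw [Submodule.mem_comap, Submodule.mem_comap, blockRestrict_emb]
  split_ifs
  · exact hv
  · exact C.zero_mem

lemma sum_emb (k : Fin (n i)) (v : Om n i → ZMod 2) : ∑ p, emb n i k v p = ∑ x, v x :=
  calc ∑ p, emb n i k v p
      = ∑ j, ∑ x, blockRestrict j (emb n i k v) x := Fintype.sum_prod_type _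
    _ = ∑ x, v x := by
      rw [Fintype.sum_eq_single k fun j hj => by simp [blockRestrict_emb, hj]]
      simp [blockRestrict_emb]

lemma indicator_blocks_eq_emb_add_emb {k l : Fin (n i)} (hkl : k ≠ l) :
    (fun p : Om n (i + 1) => if p.1 = k ∨ p.1 = l then (1 : ZMod 2) else 0) =
      emb n i k 1 + emb n i l 1 := by
  funext p
  by_cases hk : p.1 = k <;> simp [emb, hk, hkl]

end Blocks

section EvenCodes

variable (n : ℕ → ℕ) (i : ℕ)

lemma Acode_le_evenWeightCode : Acode n i ≤ evenWeightCode (Om n (i + 1)) := by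
  refine Submodule.span_le.2 ?_
  rintro _ ⟨k, l, hkl, rfl⟩
  rw [indicator_blocks_eq_emb_add_emb hkl, SetLike.mem_coe, mem_evenWeightCode]
  simp only [Pi.add_apply, Finset.sum_add_distrib, sum_emb, CharTwo.add_self_eq_zero]

lemma Kcode_le_evenWeightCode : Kcode n i ≤ evenWeightCode (Om n i) := by
  induction i with
  | zero => exact bot_le
  | succ i ih =>
    refine sup_le (iSup_le fun k => Submodule.map_le_iff_le_comap.2 fun v hv => ?_) ?_
    · rw [Submodule.mem_comap, mem_evenWeightCode, sum_emb]
      exact mem_evenWeightCode.1 (ih hv)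
    · split_ifs
      · exact Acode_le_evenWeightCode n i
      · exact bot_le

end EvenCodes

section Intersection

variable {n : ℕ → ℕ} {i : ℕ}

lemma exists_eq_comp_fst_of_mem_Acode {v : Om n (i + 1) → ZMod 2} (hv : v ∈ Acode n i) :
    ∃ c : Fin (n i) → ZMod 2, v = fun p => c p.1 := by
  have hle : Acode n i ≤ LinearMap.range
      (LinearMap.funLeft (ZMod 2) (ZMod 2) (Prod.fst : Om n (i + 1) → Fin (n i))) := by
    refine Submodule.span_le.2 ?_
    rintro _ ⟨k, l, -, rfl⟩
    exact ⟨fun j => if j = k ∨ j = l then 1 else 0, rfl⟩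
  obtain ⟨c, rfl⟩ := hle hv
  exact ⟨c, rfl⟩

lemma exists_blockRestrict_eq_one_of_mem_Acode {v : Om n (i + 1) → ZMod 2}
    (hv : v ∈ Acode n i) (hv0 : v ≠ 0) : ∃ k, blockRestrict k v = 1 := by
  obtain ⟨c, rfl⟩ := exists_eq_comp_fst_of_mem_Acode hv
  obtain ⟨p, hp⟩ := Function.ne_iff.1 hv0
  exact ⟨p.1, funext fun _ => Fin.eq_one_of_ne_zero _ hp⟩

lemma iSup_map_emb_inf_Acode_eq_bot {C : Submodule (ZMod 2) (Om n i → ZMod 2)}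
    (hC : (1 : Om n i → ZMod 2) ∉ C) :
    (⨆ k : Fin (n i), C.map (emb n i k)) ⊓ Acode n i = ⊥ := by
  refine (Submodule.eq_bot_iff _).2 fun v ⟨hB, hA⟩ => by_contra fun hv0 => ?_
  obtain ⟨k, hk⟩ := exists_blockRestrict_eq_one_of_mem_Acode hA hv0
  have hone : blockRestrict k v ∈ C := iSup_map_emb_le_comap_blockRestrict C k hB
  exact hC (hk ▸ hone)

end Intersection

theorem B_inf_A_eq_bot_general (n : ℕ → ℕ) (i : ℕ) (hn : ∀ j < i, Odd (n j)) :
    (⨆ k : Fin (n i), (Kcode n i).map (emb n i k)) ⊓ Acode n i = ⊥ :=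
  iSup_map_emb_inf_Acode_eq_bot fun hone =>
    one_notMem_evenWeightCode (odd_card_Om hn) (Kcode_le_evenWeightCode n i hone)

theorem B_inf_A_eq_bot (n : ℕ → ℕ) (hn : ∀ j, 3 ≤ n j ∧ Odd (n j)) (i : ℕ)
    (hodd : Odd (i + 1)) :
    (⨆ k : Fin (n i), (Kcode n i).map (emb n i k)) ⊓ Acode n i = ⊥ :=
  B_inf_A_eq_bot_general n i fun j _ => (hn j).2
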